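/- For all nonnegative integers s and all positive integers n, the map sending a weak composition α = (α_1, …, α_n) ∈ C(s,n) to the partition ((n−1)^{α_1}, (n−2)^{α_2}, …, 2^{α_{n−2}}, 1^{α_{n−1}}) (where exponents denote multiplicities of parts, and the part sizes coming from α_n are zero and hence omitted) is a bijection from C(s,n) onto Par(s×(n−1)), and under this bijection EMD(α, β) = |λ ⊖ μ| for all α, β ∈ C(s,n) with images λ, μ. (The bijection and distance identity used in Section 4.2.) -/

import Mathlib

/-!
Column `j` of the diagram of `α` has height `α₁ + ⋯ + α_{n-1-j}`, so the column heights, read from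
right to left, are the partial sums of `α`. A weak composition is determined by its partial sums,
and every weakly increasing sequence from `0` to `s` is a sequence of partial sums; this is the
bijection. Two diagrams differ in column `j` by the distance between the corresponding partial sums,
and adding up these distances gives the earth mover's distance, whose last term vanishes because
the two compositions have the same total.
-/

open Finset

open scoped Classical in
/-- `Par a b` is the set of Young diagrams (lower sets of boxes) fitting inside an
`a × b` rectangle, encoded as finsets of cells `(i, j)` with `i < a` and `j < b`. -/
noncomputable def Par (a b : ℕ) : Finset (Finset (ℕ × ℕ)) :=
  ((Finset.range a ×ˢ Finset.range b).powerset).filter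
    (fun S => IsLowerSet (S : Set (ℕ × ℕ)))

/-- The one-dimensional earth mover's distance between two weak compositions
`α, β` of the same number `s` into `n` parts:
`EMD(α,β) = Σ_{j=1}^n |Σ_{i=1}^j (α_i - β_i)|`. -/
def EMD {n : ℕ} (α β : Fin n → ℕ) : ℕ :=
  ∑ j : Fin n, (∑ i ∈ Finset.univ.filter (fun i : Fin n => i ≤ j),
      ((α i : ℤ) - (β i : ℤ))).natAbs

/-- The Young diagram associated to a weak composition `α = (α_1, …, α_n)`: the diagram of
the partition `((n-1)^{α_1}, (n-2)^{α_2}, …, 1^{α_{n-1}})`, where exponents denote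
multiplicities of parts.  A cell `(i, j)` (row `i`, column `j`, `0`-indexed) belongs to the
diagram exactly when row `i` has length `> j`, i.e. when `i` is less than the number of
parts of size `≥ j+1`, which is `α_1 + ⋯ + α_{n-1-j}`. -/
def toDiagram (n : ℕ) (α : Fin n → ℕ) : Finset (ℕ × ℕ) :=
  (Finset.range (∑ i, α i) ×ˢ Finset.range (n - 1)).filter
    (fun c => c.1 < ∑ i ∈ Finset.univ.filter (fun i : Fin n => (i : ℕ) < n - 1 - c.2), α i)

section PrefixSum

variable {M : Type*} [AddCommMonoid M] {n : ℕ}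

/-- The partial sum of the first `k` entries of a tuple; it allows every `k : ℕ`, being constant
from `k = n` on, so that no bound has to accompany the index. -/
def prefixSum (a : Fin n → M) (k : ℕ) : M :=
  ∑ i ∈ univ.filter (fun i : Fin n => (i : ℕ) < k), a i

@[simp]
theorem prefixSum_zero (a : Fin n → M) : prefixSum a 0 = 0 := by
  simp [prefixSum]

@[simp]
theorem prefixSum_self (a : Fin n → M) : prefixSum a n = ∑ i, a i := by
  simp [prefixSum]

theorem prefixSum_succ (a : Fin n → M) (k : Fin n) :
    prefixSum a (k + 1) = prefixSum a k + a k := by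
  have split_last : univ.filter (fun i : Fin n => (i : ℕ) < k + 1)
      = insert k (univ.filter (fun i : Fin n => (i : ℕ) < k)) := by
    ext i
    simp only [mem_filter, mem_univ, true_and, mem_insert, Fin.ext_iff]
    omega
  rw [prefixSum, split_last, sum_insert (by simp), add_comm, prefixSum]

theorem eq_of_forall_prefixSum_eq [IsLeftCancelAdd M] {a b : Fin n → M}
    (h : ∀ k ≤ n, prefixSum a k = prefixSum b k) : a = b := by
  funext i
  have h_succ := h (i + 1) i.isLt
  rwa [prefixSum_succ, prefixSum_succ, h i i.isLt.le, add_right_inj] at h_succ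

theorem prefixSum_mono [Preorder M] [CanonicallyOrderedAdd M] (a : Fin n → M) :
    Monotone (prefixSum a) := fun _ _ hkl =>
  sum_le_sum_of_subset (monotone_filter_right _ fun _ _ hi => lt_of_lt_of_le hi hkl)

theorem prefixSum_le_sum [Preorder M] [CanonicallyOrderedAdd M] (a : Fin n → M) (k : ℕ) :
    prefixSum a k ≤ ∑ i, a i :=
  sum_le_sum_of_subset (filter_subset _ _)

theorem exists_prefixSum_eq [Preorder M] [ExistsAddOfLE M] {c : ℕ → M}
    (hc : Monotone c) (h0 : c 0 = 0) (n : ℕ) :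
    ∃ a : Fin n → M, ∀ k ≤ n, prefixSum a k = c k := by
  choose d hd using fun k : ℕ => exists_add_of_le (hc k.le_succ)
  refine ⟨fun i => d i, fun k hk => ?_⟩
  induction k with
  | zero => rw [prefixSum_zero, h0]
  | succ k ih =>
    calc prefixSum (fun i : Fin n => d i) (k + 1)
        = prefixSum (fun i : Fin n => d i) k + d k := prefixSum_succ (fun i => d i) ⟨k, hk⟩
      _ = c k + d k := by rw [ih (Nat.le_of_succ_le hk)]
      _ = c (k + 1) := (hd k).symm

end PrefixSum

section Columns

variable {μ ν : YoungDiagram}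

theorem youngDiagram_eq_of_colLen_eq (h : ∀ j, μ.colLen j = ν.colLen j) : μ = ν :=
  SetLike.ext fun ⟨i, j⟩ => by
    rw [YoungDiagram.mem_iff_lt_colLen, YoungDiagram.mem_iff_lt_colLen, h]

theorem colLen_le_of_cells_subset {a b : ℕ} (h : μ.cells ⊆ range a ×ˢ range b) (j : ℕ) :
    μ.colLen j ≤ a :=
  le_of_forall_lt fun _ hi =>
    mem_range.1 (mem_product.1 (h (YoungDiagram.mem_iff_lt_colLen.2 hi))).1

theorem colLen_eq_zero_of_cells_subset {a b j : ℕ} (h : μ.cells ⊆ range a ×ˢ range b)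
    (hj : b ≤ j) : μ.colLen j = 0 :=
  Nat.eq_zero_of_not_pos fun hpos => hj.not_gt <|
    mem_range.1 (mem_product.1 (h (YoungDiagram.mem_iff_lt_colLen.2 hpos))).2

theorem card_symmDiff_range (a b : ℕ) :
    (symmDiff (range a) (range b)).card = ((a : ℤ) - b).natAbs := by
  have eq_Ico : symmDiff (range a) (range b) = Ico (min a b) (max a b) := by
    ext i
    simp only [mem_symmDiff, mem_range, mem_Ico]
    omega
  rw [eq_Ico, Nat.card_Ico]
  omega

theorem card_symmDiff_cells {b : ℕ} (hμ : μ.colLen b = 0) (hν : ν.colLen b = 0) :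
    (symmDiff μ.cells ν.cells).card
      = ∑ j ∈ range b, ((μ.colLen j : ℤ) - ν.colLen j).natAbs := by
  have column_lt : ∀ c ∈ symmDiff μ.cells ν.cells, c.2 ∈ range b := by
    rintro ⟨i, j⟩ hc
    refine mem_range.2 (lt_of_not_ge fun hj => ?_)
    have hμj := μ.colLen_anti b j hj
    have hνj := ν.colLen_anti b j hj
    simp only [mem_symmDiff, YoungDiagram.mem_cells, YoungDiagram.mem_iff_lt_colLen] at hc
    omega
  have column_eq (j : ℕ) : (symmDiff μ.cells ν.cells).filter (fun c => c.2 = j)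
      = symmDiff (range (μ.colLen j)) (range (ν.colLen j)) ×ˢ {j} := by
    ext ⟨i, j'⟩
    simp only [mem_filter, mem_product, mem_singleton, and_congr_left_iff]
    rintro rfl
    simp only [mem_symmDiff, YoungDiagram.mem_cells, YoungDiagram.mem_iff_lt_colLen, mem_range]
  rw [card_eq_sum_card_fiberwise column_lt]
  refine sum_congr rfl fun j _ => ?_
  rw [column_eq, card_product, card_singleton, mul_one, card_symmDiff_range]

end Columns

theorem mem_Par {a b : ℕ} {S : Finset (ℕ × ℕ)} :
    S ∈ Par a b ↔ S ⊆ range a ×ˢ range b ∧ IsLowerSet (S : Set (ℕ × ℕ)) := by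
  simp only [Par, mem_filter, mem_powerset]

section CompositionDiagram

variable {n : ℕ}

theorem mem_toDiagram {α : Fin n → ℕ} {i j : ℕ} :
    (i, j) ∈ toDiagram n α ↔ i < prefixSum α (n - 1 - j) := by
  simp only [toDiagram, mem_filter, mem_product, mem_range]
  refine ⟨And.right, fun hi => ⟨⟨hi.trans_le (prefixSum_le_sum α _), ?_⟩, hi⟩⟩
  by_contra! hj
  rw [Nat.sub_eq_zero_of_le hj, prefixSum_zero] at hi
  exact Nat.not_lt_zero i hi

theorem isLowerSet_toDiagram (α : Fin n → ℕ) :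
    IsLowerSet (toDiagram n α : Set (ℕ × ℕ)) := by
  rintro ⟨i, j⟩ ⟨i', j'⟩ ⟨hi, hj⟩ hmem
  rw [mem_coe, mem_toDiagram] at hmem ⊢
  exact (hi.trans_lt hmem).trans_le (prefixSum_mono α (Nat.sub_le_sub_left hj _))

/-- `toDiagram n α` bundled as a Young diagram, which makes its column lengths available. -/
def compositionDiagram (α : Fin n → ℕ) : YoungDiagram where
  cells := toDiagram n α
  isLowerSet := isLowerSet_toDiagram α

theorem colLen_compositionDiagram (α : Fin n → ℕ) (j : ℕ) :
    (compositionDiagram α).colLen j = prefixSum α (n - 1 - j) :=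
  eq_of_forall_lt_iff fun _ => YoungDiagram.mem_iff_lt_colLen.symm.trans mem_toDiagram

theorem toDiagram_mem_Par (α : Fin n → ℕ) : toDiagram n α ∈ Par (∑ i, α i) (n - 1) :=
  mem_Par.2 ⟨filter_subset _ _, isLowerSet_toDiagram α⟩

theorem eq_of_toDiagram_eq_of_sum_eq {α β : Fin n → ℕ} (hsum : ∑ i, α i = ∑ i, β i)
    (h : toDiagram n α = toDiagram n β) : α = β := by
  refine eq_of_forall_prefixSum_eq fun k hk => ?_
  rcases hk.eq_or_lt with rfl | hkn
  · rwa [prefixSum_self, prefixSum_self]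
  · have hdiagram : compositionDiagram α = compositionDiagram β := YoungDiagram.ext h
    have hcol := congrArg (fun μ => μ.colLen (n - 1 - k)) hdiagram
    simpa only [colLen_compositionDiagram, Nat.sub_sub_self (Nat.le_sub_one_of_lt hkn)] using hcol

theorem exists_compositionDiagram_eq {μ : YoungDiagram} {s : ℕ} (hn : 1 ≤ n)
    (hμ : μ.cells ⊆ range s ×ˢ range (n - 1)) :
    ∃ α : Fin n → ℕ, ∑ i, α i = s ∧ compositionDiagram α = μ := by
  let c : ℕ → ℕ := fun k => if k < n then μ.colLen (n - 1 - k) else s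
  have hc : Monotone c := by
    intro k l hkl
    have hle := colLen_le_of_cells_subset hμ (n - 1 - k)
    have hanti := μ.colLen_anti (n - 1 - l) (n - 1 - k) (Nat.sub_le_sub_left hkl _)
    simp only [c]
    split_ifs <;> omega
  have hc0 : c 0 = 0 := (if_pos hn).trans (colLen_eq_zero_of_cells_subset hμ le_rfl)
  obtain ⟨α, hα⟩ := exists_prefixSum_eq hc hc0 n
  refine ⟨α, ?_, youngDiagram_eq_of_colLen_eq fun j => ?_⟩
  · rw [← prefixSum_self, hα n le_rfl]
    exact if_neg (lt_irrefl n)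
  · rw [colLen_compositionDiagram, hα _ (by omega)]
    rcases le_total (n - 1) j with hj | hj
    · rw [Nat.sub_eq_zero_of_le hj, hc0, colLen_eq_zero_of_cells_subset hμ hj]
    · simp only [c, if_pos (show n - 1 - j < n by omega), Nat.sub_sub_self hj]

theorem surjOn_toDiagram (s : ℕ) (hn : 1 ≤ n) :
    Set.SurjOn (toDiagram n) {α | ∑ i, α i = s} (Par s (n - 1)) := by
  intro S hS
  obtain ⟨hsub, hlower⟩ := mem_Par.1 (mem_coe.1 hS)
  obtain ⟨α, hsum, hα⟩ := exists_compositionDiagram_eq (μ := ⟨S, hlower⟩) hn hsub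
  exact ⟨α, hsum, congrArg YoungDiagram.cells hα⟩

theorem bijOn_toDiagram (s : ℕ) (hn : 1 ≤ n) :
    Set.BijOn (toDiagram n) {α | ∑ i, α i = s} (Par s (n - 1)) :=
  ⟨by rintro α rfl; exact toDiagram_mem_Par α,
    fun _ hα _ hβ => eq_of_toDiagram_eq_of_sum_eq (Eq.trans hα (Eq.symm hβ)),
    surjOn_toDiagram s hn⟩

theorem EMD_eq_sum_natAbs_prefixSum (α β : Fin n → ℕ) :
    EMD α β
      = ∑ k ∈ range n, ((prefixSum α (k + 1) : ℕ) - (prefixSum β (k + 1) : ℕ) : ℤ).natAbs := by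
  rw [← Fin.sum_univ_eq_sum_range fun k =>
    ((prefixSum α (k + 1) : ℕ) - (prefixSum β (k + 1) : ℕ) : ℤ).natAbs]
  simp only [EMD, prefixSum, Fin.le_def, Nat.lt_succ_iff, sum_sub_distrib, Nat.cast_sum]

theorem EMD_eq_card_symmDiff {α β : Fin n → ℕ} (hsum : ∑ i, α i = ∑ i, β i) :
    EMD α β = (symmDiff (toDiagram n α) (toDiagram n β)).card := by
  let d : ℕ → ℕ := fun k => ((prefixSum α k : ℕ) - (prefixSum β k : ℕ) : ℤ).natAbs
  have d_zero : d 0 = 0 := by simp [d]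
  have d_self : d n = 0 := by simp [d, hsum]
  have column_zero (γ : Fin n → ℕ) : (compositionDiagram γ).colLen n = 0 := by
    rw [colLen_compositionDiagram, Nat.sub_eq_zero_of_le (Nat.sub_le n 1), prefixSum_zero]
  calc EMD α β
      = ∑ k ∈ range n, d (k + 1) := EMD_eq_sum_natAbs_prefixSum α β
    _ = ∑ k ∈ range n, d k := by
        have h := (sum_range_succ' d n).symm.trans (sum_range_succ d n)
        rwa [d_zero, d_self, add_zero, add_zero] at h
    _ = ∑ j ∈ range n, d (n - 1 - j) := (sum_range_reflect d n).symm
    _ = ∑ j ∈ range n, (((compositionDiagram α).colLen j : ℤ)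
          - (compositionDiagram β).colLen j).natAbs := by
        simp only [colLen_compositionDiagram, d]
    _ = (symmDiff (toDiagram n α) (toDiagram n β)).card :=
        (card_symmDiff_cells (column_zero α) (column_zero β)).symm

end CompositionDiagram

/-- The bijection and distance identity of Section 4.2: `α ↦ toDiagram n α` maps the weak
compositions of `s` into `n` parts bijectively onto `Par(s×(n-1))`, and under this map the
earth mover's distance becomes the size of the symmetric difference of Young diagrams. -/
theorem composition_diagram_bijection (s n : ℕ) (hn : 1 ≤ n) :
    Set.BijOn (toDiagram n)
      ((Finset.Nat.antidiagonalTuple n s : Finset (Fin n → ℕ)) : Set (Fin n → ℕ))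
      ((Par s (n - 1) : Finset (Finset (ℕ × ℕ))) : Set (Finset (ℕ × ℕ))) ∧
    ∀ α ∈ Finset.Nat.antidiagonalTuple n s, ∀ β ∈ Finset.Nat.antidiagonalTuple n s,
      EMD α β = (symmDiff (toDiagram n α) (toDiagram n β)).card := by
  have coe_antidiagonalTuple :
      (Finset.Nat.antidiagonalTuple n s : Set (Fin n → ℕ)) = {α | ∑ i, α i = s} :=
    Set.ext fun _ => Finset.Nat.mem_antidiagonalTuple
  refine ⟨coe_antidiagonalTuple ▸ bijOn_toDiagram s hn, fun α hα β hβ => ?_⟩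
  rw [Finset.Nat.mem_antidiagonalTuple] at hα hβ
  exact EMD_eq_card_symmDiff (hα.trans hβ.symm)
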